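/- arXiv:1201.6433 — 2 statements merged into one kernel-verified Lean document; each statement's English description precedes it below -/
import Mathlib

section
/- Let h ∈ H^0_{α,ω}(ℝⁿ), n ≥ 2. Then there exists a constant σ (depending on h) with 0 < σ < 1 such that sup_{ξ ≠ 0} |ξ|^{n−σ} h(ξ) < ∞. (This is the statement that F_h embeds continuously into PM^{n−σ}.) -/
open MeasureTheory ENNReal Filter Topology Metric

/-- The convolution `h*h(ξ) = ∫ h(ξ-η) h(η) dη` of an `[0,∞]`-valued function on `ℝⁿ`. -/
noncomputable def selfConv {n : ℕ} (h : EuclideanSpace ℝ (Fin n) → ℝ≥0∞)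
    (ξ : EuclideanSpace ℝ (Fin n)) : ℝ≥0∞ :=
  ∫⁻ η, h (ξ - η) * h η

/-- `h` is a majorizing kernel with exponent `θ` on `ℝⁿ`. -/
def IsMajorizingKernel {n : ℕ} (θ : ℝ) (h : EuclideanSpace ℝ (Fin n) → ℝ≥0∞) : Prop :=
  Measurable h ∧ (∀ ξ, 0 < h ξ) ∧
  (∃ B : ℝ, 0 < B ∧ ∀ ξ, selfConv h ξ ≤ ENNReal.ofReal (B * ‖ξ‖ ^ θ) * h ξ) ∧
  volume {ξ : EuclideanSpace ℝ (Fin n) | h ξ = ∞} = 0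

/-- `h` behaves algebraically at the origin as `|ξ|^{-α}`. -/
def BehavesAtOrigin {n : ℕ} (α : ℝ) (h : EuclideanSpace ℝ (Fin n) → ℝ≥0∞) : Prop :=
  ∃ R C₁ C₂ : ℝ, 0 < R ∧ 0 < C₁ ∧ 0 < C₂ ∧
    ∀ ξ : EuclideanSpace ℝ (Fin n), 0 < ‖ξ‖ → ‖ξ‖ < R →
      ENNReal.ofReal (C₁ * ‖ξ‖ ^ (-α)) ≤ h ξ ∧ h ξ ≤ ENNReal.ofReal (C₂ * ‖ξ‖ ^ (-α))

/-- `h` behaves algebraically at infinity as `|ξ|^{-ω}`. -/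
def BehavesAtInfinity {n : ℕ} (ω : ℝ) (h : EuclideanSpace ℝ (Fin n) → ℝ≥0∞) : Prop :=
  ∃ R C₁ C₂ : ℝ, 0 < R ∧ 0 < C₁ ∧ 0 < C₂ ∧
    ∀ ξ : EuclideanSpace ℝ (Fin n), R < ‖ξ‖ →
      ENNReal.ofReal (C₁ * ‖ξ‖ ^ (-ω)) ≤ h ξ ∧ h ξ ≤ ENNReal.ofReal (C₂ * ‖ξ‖ ^ (-ω))

/-- `h ∈ H^θ_{α,ω}(ℝⁿ)`: a majorizing kernel of exponent `θ` with radial algebraic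
growth and decay: it behaves as `|ξ|^{-α}` at the origin (`α ≥ 0`), as `|ξ|^{-ω}` at
infinity (`ω > 0`), and is bounded on the complement of every neighborhood of the
origin. -/
def IsRadialAlgebraicKernel {n : ℕ} (θ α ω : ℝ) (h : EuclideanSpace ℝ (Fin n) → ℝ≥0∞) :
    Prop :=
  IsMajorizingKernel θ h ∧ 0 ≤ α ∧ BehavesAtOrigin α h ∧ 0 < ω ∧ BehavesAtInfinity ω h ∧
    ∀ ε : ℝ, 0 < ε → ∃ M : ℝ, ∀ ξ : EuclideanSpace ℝ (Fin n), ε ≤ ‖ξ‖ →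
      h ξ ≤ ENNReal.ofReal M

lemma aux_lower {n : ℕ} (hn : 2 ≤ n) (h : EuclideanSpace ℝ (Fin n) → ℝ≥0∞)
    (hfin : ∫⁻ x, h x < ∞) (S : Set ℝ) (hS : MeasurableSet S) (hS0 : S ⊆ Set.Ioi 0) (C a : ℝ)
    (hC : 0 < C)
    (hlow : ∀ ξ : EuclideanSpace ℝ (Fin n), ‖ξ‖ ∈ S →
      ENNReal.ofReal (C * ‖ξ‖ ^ (-a)) ≤ h ξ) :
    IntegrableOn (fun y : ℝ => y ^ ((n : ℝ) - 1 - a)) S := by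
  haveI : Nonempty (Fin n) := ⟨⟨0, by omega⟩⟩
  set f : ℝ → ℝ := S.indicator (fun y => C * y ^ (-a)) with hf
  have hfm : Measurable f := by
    apply Measurable.indicator _ hS
    fun_prop
  have hf0 : ∀ y, 0 ≤ f y := by
    intro y
    apply Set.indicator_nonneg
    intro y hy
    have : 0 < y := hS0 hy
    positivity
  have hint : Integrable (fun x : EuclideanSpace ℝ (Fin n) => f ‖x‖) volume := by
    refine ⟨(hfm.comp measurable_norm).aestronglyMeasurable, ?_⟩
    rw [hasFiniteIntegral_iff_ofReal (Eventually.of_forall fun x => hf0 _)]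
    refine lt_of_le_of_lt (lintegral_mono fun x => ?_) hfin
    by_cases hx : ‖x‖ ∈ S
    · simpa [hf, hx] using hlow x hx
    · simp [hf, hx]
  rw [integrable_fun_norm_addHaar] at hint
  have h2 := (hint.mono_set hS0).const_mul C⁻¹
  refine (integrableOn_congr_fun ?_ hS).mp h2
  intro y hy
  have hy0 : 0 < y := hS0 hy
  simp only [hf, Set.indicator_of_mem hy, smul_eq_mul, finrank_euclideanSpace, Fintype.card_fin]
  rw [← Real.rpow_natCast, Nat.cast_sub (by omega), sub_eq_add_neg _ a, Real.rpow_add hy0]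
  push_cast
  field_simp

lemma aux_integrable {n : ℕ} (hn : 2 ≤ n) (ω : ℝ) (hω : 0 < ω)
    (h : EuclideanSpace ℝ (Fin n) → ℝ≥0∞) (hm : IsMajorizingKernel 0 h)
    (hi : BehavesAtInfinity ω h) : ∫⁻ x, h x < ∞ := by
  obtain ⟨hmeas, -, ⟨B, hB, hconv⟩, -⟩ := hm
  obtain ⟨R, C₁, C₂, hR, hC₁, hC₂, hb⟩ := hi
  set K : ℝ := B * C₂ / C₁ * (3 / 2 : ℝ) ^ ω with hK
  have key : ∀ k : ℝ, R < k → ∫⁻ x in ball (0 : EuclideanSpace ℝ (Fin n)) k, h x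
      ≤ ENNReal.ofReal K := by
    intro k hk
    have hk0 : 0 < k := hR.trans hk
    set ξ : EuclideanSpace ℝ (Fin n) := EuclideanSpace.single ⟨0, by omega⟩ (2 * k) with hξ
    have hξn : ‖ξ‖ = 2 * k := by
      rw [hξ, EuclideanSpace.norm_single, Real.norm_of_nonneg (by positivity)]
    have h1 : ENNReal.ofReal (C₁ * (3 * k) ^ (-ω)) *
        ∫⁻ x in ball (0 : EuclideanSpace ℝ (Fin n)) k, h x ≤ selfConv h ξ := by
      rw [← lintegral_const_mul _ hmeas]
      refine le_trans ?_ (setLIntegral_le_lintegral (ball 0 k) _)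
      refine setLIntegral_mono' measurableSet_ball fun η hη => ?_
      gcongr
      rw [mem_ball_zero_iff] at hη
      have l1 : k < ‖ξ - η‖ := by
        have := norm_sub_norm_le ξ η
        linarith
      have l2 : ‖ξ - η‖ ≤ 3 * k := by
        have := norm_sub_le ξ η
        linarith
      refine le_trans ?_ (hb _ (hk.trans l1)).1
      apply ENNReal.ofReal_le_ofReal
      apply mul_le_mul_of_nonneg_left _ hC₁.le
      exact Real.rpow_le_rpow_of_nonpos (hk0.trans l1) l2 (by linarith)
    have h2 := (h1.trans (hconv ξ)).trans
      (mul_le_mul_right (hb ξ (by rw [hξn]; linarith)).2 _)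
    rw [hξn, Real.rpow_zero, mul_one, ← ENNReal.ofReal_mul hB.le] at h2
    have hD : 0 < C₁ * (3 * k) ^ (-ω) := by positivity
    have h3 : B * (C₂ * (2 * k) ^ (-ω)) = C₁ * (3 * k) ^ (-ω) * K := by
      rw [hK, Real.rpow_neg (by positivity), Real.rpow_neg (by positivity),
        Real.mul_rpow (by norm_num) hk0.le, Real.mul_rpow (by norm_num) hk0.le,
        Real.div_rpow (by norm_num) (by norm_num)]
      field_simp
    rw [h3, ENNReal.ofReal_mul hD.le] at h2
    exact (ENNReal.mul_le_mul_iff_right (by simpa using hD) ENNReal.ofReal_ne_top).mp h2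
  have hU : (⋃ i : ℕ, ball (0 : EuclideanSpace ℝ (Fin n)) i) = Set.univ := iUnion_ball_nat 0
  rw [← setLIntegral_univ, ← hU, setLIntegral_iUnion_of_directed]
  · refine lt_of_le_of_lt (iSup_le fun i => ?_) (ENNReal.ofReal_lt_top (r := K))
    refine (lintegral_mono_set (ball_subset_ball (le_max_left (i : ℝ) (R + 1)))).trans
      (key _ (lt_of_lt_of_le (by linarith) (le_max_right _ _)))
  · apply directed_of_isDirected_le
    intro i j hij
    exact ball_subset_ball (by exact_mod_cast hij)

theorem embedding_PM_theta_zero (n : ℕ) (hn : 2 ≤ n) (α ω : ℝ)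
    (h : EuclideanSpace ℝ (Fin n) → ℝ≥0∞) (hker : IsRadialAlgebraicKernel 0 α ω h) :
    ∃ σ : ℝ, 0 < σ ∧ σ < 1 ∧
      (⨆ (ξ : EuclideanSpace ℝ (Fin n)) (_ : ξ ≠ 0),
        ENNReal.ofReal (‖ξ‖ ^ ((n : ℝ) - σ)) * h ξ) < ∞ := by
  obtain ⟨hm, hα, ho, hω, hi, hbd⟩ := hker
  have hfin := aux_integrable hn ω hω h hm hi
  obtain ⟨r, c₁, c₂, hr, hc₁, hc₂, hbo⟩ := ho
  obtain ⟨R, C₁, C₂, hR, hC₁, hC₂, hbi⟩ := hi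
  have hαn : α < n := by
    have := aux_lower hn h hfin (Set.Ioo 0 r) measurableSet_Ioo (fun x hx => hx.1) c₁ α hc₁
      (fun ξ hξ => (hbo ξ hξ.1 hξ.2).1)
    rw [intervalIntegral.integrableOn_Ioo_rpow_iff hr] at this
    linarith
  have hωn : (n : ℝ) < ω := by
    have := aux_lower hn h hfin (Set.Ioi R) measurableSet_Ioi
      (Set.Ioi_subset_Ioi hR.le) C₁ ω hC₁ (fun ξ hξ => (hbi ξ hξ).1)
    rw [integrableOn_Ioi_rpow_iff hR] at this
    linarith
  obtain ⟨M, hM⟩ := hbd r hr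
  have hn' : (2 : ℝ) ≤ n := by exact_mod_cast hn
  have hσ1 : min (1 / 2) ((n : ℝ) - α) ≤ 1 / 2 := min_le_left _ _
  have hσ2 : min (1 / 2) ((n : ℝ) - α) ≤ n - α := min_le_right _ _
  have hσ0 : 0 < min (1 / 2) ((n : ℝ) - α) := lt_min (by norm_num) (by linarith)
  generalize min (1 / 2) ((n : ℝ) - α) = σ at *
  refine ⟨σ, hσ0, by linarith, ?_⟩
  refine lt_of_le_of_lt (b := ENNReal.ofReal (c₂ * r ^ (n - σ - α)) +
    ENNReal.ofReal (C₂ * R ^ (n - σ - ω)) + ENNReal.ofReal (R ^ (n - σ)) * ENNReal.ofReal M)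
    (iSup₂_le fun ξ hξ => ?_) ?_
  · have hξ0 : 0 < ‖ξ‖ := norm_pos_iff.mpr hξ
    rcases lt_or_ge ‖ξ‖ r with h1 | h1
    · rw [add_assoc]
      refine le_trans ?_ le_self_add
      refine (mul_le_mul_right (hbo ξ hξ0 h1).2 _).trans ?_
      rw [← ENNReal.ofReal_mul (by positivity)]
      apply ENNReal.ofReal_le_ofReal
      rw [mul_left_comm, ← Real.rpow_add hξ0, ← sub_eq_add_neg]
      have := Real.rpow_le_rpow hξ0.le h1.le (z := n - σ - α) (by linarith)
      gcongr
    · rcases lt_or_ge R ‖ξ‖ with h2 | h2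
      · refine le_trans ?_ le_self_add
        refine le_trans ?_ le_add_self
        refine (mul_le_mul_right (hbi ξ h2).2 _).trans ?_
        rw [← ENNReal.ofReal_mul (by positivity)]
        apply ENNReal.ofReal_le_ofReal
        rw [mul_left_comm, ← Real.rpow_add hξ0, ← sub_eq_add_neg]
        have := Real.rpow_le_rpow_of_nonpos hR h2.le (z := n - σ - ω) (by linarith)
        gcongr
      · refine le_trans ?_ le_add_self
        have := Real.rpow_le_rpow hξ0.le h2 (z := n - σ) (by linarith)
        gcongr
        exact hM ξ h1
  · exact ENNReal.add_lt_top.mpr ⟨ENNReal.add_lt_top.mpr ⟨ENNReal.ofReal_lt_top,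
      ENNReal.ofReal_lt_top⟩, ENNReal.mul_lt_top ENNReal.ofReal_lt_top ENNReal.ofReal_lt_top⟩
end

section
/- Let h ∈ H^0_{α,ω}(ℝⁿ) with ω > n. Then h ∈ L¹(ℝⁿ), i.e., ∫_{ℝⁿ} h(ξ) dξ < ∞. -/
open MeasureTheory ENNReal Filter Topology Metric

/-- For `h ∈ H^0_{α,ω}(ℝⁿ)` with `ω > n`, the kernel `h` is integrable:
`∫ h(ξ) dξ < ∞`. -/
theorem mem_L1_of_omega_gt (n : ℕ) (hn : 1 ≤ n) (α ω : ℝ) (hω : (n : ℝ) < ω)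
    (h : EuclideanSpace ℝ (Fin n) → ℝ≥0∞) (hker : IsRadialAlgebraicKernel 0 α ω h) :
    (∫⁻ ξ : EuclideanSpace ℝ (Fin n), h ξ) < ∞ := by
  obtain ⟨⟨hm, _, ⟨B, _, hB⟩, _⟩, _, _, hω0, ⟨R, C₁, C₂, hR, hC₁, hC₂, hI⟩, _⟩ := hker
  have : Nonempty (Fin n) := ⟨⟨0, hn⟩⟩
  set S : ℝ := max R 1 with hS
  have hRS : R ≤ S := le_max_left _ _
  have h1S : 1 ≤ S := le_max_right _ _
  obtain ⟨ξ₀, hξ₀⟩ := exists_norm_eq (EuclideanSpace ℝ (Fin n)) (c := 2 * S + 1) (by linarith)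
  have hfin : selfConv h ξ₀ < ∞ := by
    refine (hB ξ₀).trans_lt (ENNReal.mul_lt_top ENNReal.ofReal_lt_top ?_)
    exact ((hI ξ₀ (by linarith)).2).trans_lt ENNReal.ofReal_lt_top
  set c : ℝ := C₁ * (3 * S + 1) ^ (-ω) with hc
  have hcpos : 0 < c := by positivity
  have hlow : ∀ η ∈ closedBall (0 : EuclideanSpace ℝ (Fin n)) S,
      ENNReal.ofReal c ≤ h (ξ₀ - η) := by
    intro η hη
    rw [mem_closedBall_zero_iff] at hη
    have h1 : ‖ξ₀‖ - ‖η‖ ≤ ‖ξ₀ - η‖ := norm_sub_norm_le _ _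
    have h2 : ‖ξ₀ - η‖ ≤ ‖ξ₀‖ + ‖η‖ := norm_sub_le _ _
    refine le_trans (ENNReal.ofReal_le_ofReal ?_) (hI (ξ₀ - η) (by linarith)).1
    refine mul_le_mul_of_nonneg_left ?_ hC₁.le
    exact Real.rpow_le_rpow_of_nonpos (by linarith) (by linarith) (by linarith)
  have hin : ∫⁻ ξ in closedBall (0 : EuclideanSpace ℝ (Fin n)) S, h ξ < ∞ := by
    have h3 : ENNReal.ofReal c * ∫⁻ ξ in closedBall (0 : EuclideanSpace ℝ (Fin n)) S, h ξ
        ≤ selfConv h ξ₀ := by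
      rw [← lintegral_const_mul _ hm]
      refine le_trans (setLIntegral_mono' measurableSet_closedBall ?_)
        (setLIntegral_le_lintegral (closedBall (0 : EuclideanSpace ℝ (Fin n)) S) _)
      intro η hη
      exact mul_le_mul_left (hlow η hη) _
    by_contra hcon
    rw [not_lt, top_le_iff] at hcon
    rw [hcon, ENNReal.mul_top (by simpa using hcpos)] at h3
    exact absurd hfin (not_lt.mpr h3)
  have hout : ∫⁻ ξ in (closedBall (0 : EuclideanSpace ℝ (Fin n)) S)ᶜ, h ξ < ∞ := by
    have hint : ∫⁻ x : EuclideanSpace ℝ (Fin n), ENNReal.ofReal ((1 + ‖x‖) ^ (-ω)) < ∞ :=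
      finite_integral_one_add_norm (by simpa using hω)
    refine lt_of_le_of_lt ?_ (ENNReal.mul_lt_top
      (ENNReal.ofReal_lt_top (r := C₂ * (2⁻¹ : ℝ) ^ (-ω))) hint)
    rw [← lintegral_const_mul' _ _ ENNReal.ofReal_ne_top]
    refine le_trans (setLIntegral_mono' measurableSet_closedBall.compl ?_)
      (setLIntegral_le_lintegral (closedBall (0 : EuclideanSpace ℝ (Fin n)) S)ᶜ _)
    intro ξ hξ
    rw [Set.mem_compl_iff, mem_closedBall_zero_iff, not_le] at hξ
    refine (hI ξ (by linarith)).2.trans ?_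
    rw [← ENNReal.ofReal_mul (by positivity)]
    refine ENNReal.ofReal_le_ofReal ?_
    rw [mul_assoc, ← Real.mul_rpow (by norm_num) (by positivity)]
    refine mul_le_mul_of_nonneg_left ?_ hC₂.le
    exact Real.rpow_le_rpow_of_nonpos (by positivity) (by linarith) (by linarith)
  rw [← lintegral_add_compl h
    (measurableSet_closedBall (x := (0 : EuclideanSpace ℝ (Fin n))) (ε := S))]
  exact ENNReal.add_lt_top.mpr ⟨hin, hout⟩
end
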